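/- Two countable compact Hausdorff spaces with the same Cantor-Bendixson rank and the same Cantor-Bendixson degree are homeomorphic. -/

import Mathlib

open Set

/-- The Cantor derivative of a subset `A` of a space, relative to the subspace topology:
points of `A` that do not lie in a finite relatively-open subset of `A`. -/
def sderiv {X : Type*} [TopologicalSpace X] (A : Set X) : Set X :=
  {x | x ∈ A ∧ ∀ U : Set X, IsOpen U → x ∈ U → (U ∩ A).Infinite}

/-- Iterated Cantor derivative of a subset. `cbIter A α` is `A^α`. -/
noncomputable def cbIter {X : Type*} [TopologicalSpace X] (A : Set X) (o : Ordinal) : Set X :=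
  Ordinal.limitRecOn o A (fun _ ih => sderiv ih)
    (fun o _ ih => ⋂ (β : Ordinal), ⋂ (h : β < o), ih β h)

/-- `ρ` is the Cantor-Bendixson rank of `X`. -/
def IsCBRank (X : Type*) [TopologicalSpace X] (ρ : Ordinal) : Prop :=
  cbIter (Set.univ : Set X) ρ = ∅ ∧ ∀ β < ρ, cbIter (Set.univ : Set X) β ≠ ∅

/-- A subset has small rank if its Cantor-Bendixson rank is strictly smaller than that of
the ambient space. -/
def SmallRank {X : Type u} [TopologicalSpace X] (A : Set X) : Prop :=
  ∃ σ : Ordinal.{u}, cbIter A σ = ∅ ∧ cbIter (Set.univ : Set X) σ ≠ ∅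

/-- A rough partition: a cover of `X` by open sets of maximal rank whose pairwise
intersections have small rank. -/
def IsRoughPartition {X : Type*} [TopologicalSpace X] (P : Set (Set X)) : Prop :=
  ⋃₀ P = Set.univ ∧ (∀ O ∈ P, IsOpen O ∧ ¬ SmallRank O) ∧
    ∀ O₁ ∈ P, ∀ O₂ ∈ P, O₁ ≠ O₂ → SmallRank (O₁ ∩ O₂)

/-- The Cantor-Bendixson degree of `X`. -/
noncomputable def cbDegree (X : Type*) [TopologicalSpace X] : Cardinal :=
  sSup {c : Cardinal | ∃ P : Set (Set X), IsRoughPartition P ∧ c = Cardinal.mk P}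

open TopologicalSpace (Clopens)
open scoped Topology

/-!
For a nonempty clopen subset `A` of `X`, the derivatives `A^α` are infinite below a top level,
finite and nonempty at it, and empty above it, the size of the top level being the degree. Hence
rank and degree together say how many points `A^α` has, up to infinity, for every `α`. Call two
clopen sets equivalent when they agree in this respect.

If `A` is equivalent to `B`, a clopen splitting of `A` is matched by one of `B`: one half of the
splitting contains a point of the top level of `A`; carve out of `B` a copy of the other half, and
subtraction of finite cardinalities at the top level shows that the remainders are equivalent.
Vaught's back-and-forth argument then applies: since the spaces are countable, countably many
clopen sets separate points, and alternately deciding these on the two sides gives matched sequences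
of clopen partitions. Their labels embed both spaces in `ℕ → ℕ` with, by compactness, the same
range.
-/

universe u v

section Derivative

variable {X : Type u} [TopologicalSpace X] {A B U : Set X}

theorem sderiv_subset (A : Set X) : sderiv A ⊆ A := fun _ hx => hx.1

theorem sderiv_mono (h : A ⊆ B) : sderiv A ⊆ sderiv B := fun _ hx =>
  ⟨h hx.1, fun U hU hxU => (hx.2 U hU hxU).mono (inter_subset_inter_right U h)⟩

theorem exists_isOpen_inter_finite {x : X} (hxA : x ∈ A) (hx : x ∉ sderiv A) :
    ∃ U, IsOpen U ∧ x ∈ U ∧ (U ∩ A).Finite := by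
  by_contra! h
  exact hx ⟨hxA, h⟩

theorem isClosed_sderiv (hA : IsClosed A) : IsClosed (sderiv A) := by
  rw [← isOpen_compl_iff, isOpen_iff_forall_mem_open]
  intro x hx
  by_cases hxA : x ∈ A
  · obtain ⟨U, hU, hxU, hfin⟩ := exists_isOpen_inter_finite hxA hx
    exact ⟨U, fun z hz hz' => hz'.2 U hU hz hfin, hU, hxU⟩
  · exact ⟨Aᶜ, compl_subset_compl.2 (sderiv_subset A), hA.isOpen_compl, hxA⟩

theorem sderiv_inter_of_isOpen (hU : IsOpen U) : sderiv (U ∩ A) = U ∩ sderiv A := by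
  refine Subset.antisymm (fun x hx => ⟨hx.1.1, sderiv_mono inter_subset_right hx⟩) ?_
  rintro x ⟨hxU, hxA, hx⟩
  refine ⟨⟨hxU, hxA⟩, fun V hV hxV => ?_⟩
  rw [← inter_assoc]
  exact hx (V ∩ U) (hV.inter hU) ⟨hxV, hxU⟩

theorem finite_of_sderiv_eq_empty (hA : IsCompact A) (h : sderiv A = ∅) : A.Finite := by
  suffices (A ∩ A).Finite by rwa [inter_self] at this
  refine hA.induction_on (p := fun S => (S ∩ A).Finite) (by simp)
    (fun S T hST hT => hT.subset (inter_subset_inter_left A hST))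
    (fun S T hS hT => by rw [union_inter_distrib_right]; exact hS.union hT) fun x hx => ?_
  obtain ⟨U, hU, hxU, hfin⟩ := exists_isOpen_inter_finite hx (h ▸ notMem_empty x)
  exact ⟨U, mem_nhdsWithin_of_mem_nhds (hU.mem_nhds hxU), hfin⟩

end Derivative

section IteratedDerivative

variable {X : Type u} [TopologicalSpace X] {A B U : Set X} {α β ρ : Ordinal.{v}}

theorem cbIter_zero (A : Set X) : cbIter A 0 = A :=
  Ordinal.limitRecOn_zero _ _ _

theorem cbIter_add_one (A : Set X) (α : Ordinal) : cbIter A (α + 1) = sderiv (cbIter A α) :=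
  Ordinal.limitRecOn_add_one _ _ _ _

theorem cbIter_limit (A : Set X) {α : Ordinal} (hα : Order.IsSuccLimit α) :
    cbIter A α = ⋂ β < α, cbIter A β :=
  Ordinal.limitRecOn_limit _ _ _ _ hα

theorem cbIter_antitone (A : Set X) : Antitone (cbIter A : Ordinal.{v} → Set X) := by
  intro α β h
  induction β using Ordinal.limitRecOn with
  | zero => rw [nonpos_iff_eq_zero.1 h]
  | add_one β ih =>
    obtain rfl | h := h.eq_or_lt
    · rfl
    · rw [cbIter_add_one]
      exact (sderiv_subset _).trans (ih (Order.lt_add_one_iff.1 h))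
  | limit β hβ _ =>
    obtain rfl | h := h.eq_or_lt
    · rfl
    · rw [cbIter_limit A hβ]
      exact iInter₂_subset α h

theorem cbIter_subset (A : Set X) (α : Ordinal) : cbIter A α ⊆ A :=
  (cbIter_antitone A zero_le).trans (cbIter_zero A).subset

theorem cbIter_mono (h : A ⊆ B) (α : Ordinal) : cbIter A α ⊆ cbIter B α := by
  induction α using Ordinal.limitRecOn with
  | zero => rwa [cbIter_zero, cbIter_zero]
  | add_one α ih =>
    rw [cbIter_add_one, cbIter_add_one]
    exact sderiv_mono ih
  | limit α hα ih =>
    rw [cbIter_limit A hα, cbIter_limit B hα]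
    exact iInter₂_mono ih

theorem cbIter_eq_empty_mono (h : A ⊆ B) (hB : cbIter B α = ∅) : cbIter A α = ∅ :=
  subset_empty_iff.1 (hB ▸ cbIter_mono h α)

theorem isClosed_cbIter (hA : IsClosed A) (α : Ordinal) : IsClosed (cbIter A α) := by
  induction α using Ordinal.limitRecOn with
  | zero => rwa [cbIter_zero]
  | add_one α ih =>
    rw [cbIter_add_one]
    exact isClosed_sderiv ih
  | limit α hα ih =>
    rw [cbIter_limit A hα]
    exact isClosed_biInter ih

theorem cbIter_inter_of_isOpen (hU : IsOpen U) (A : Set X) (α : Ordinal) :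
    cbIter (U ∩ A) α = U ∩ cbIter A α := by
  induction α using Ordinal.limitRecOn with
  | zero => rw [cbIter_zero, cbIter_zero]
  | add_one α ih => rw [cbIter_add_one, cbIter_add_one, ih, sderiv_inter_of_isOpen hU]
  | limit α hα ih =>
    rw [cbIter_limit _ hα, cbIter_limit A hα, iInter₂_congr ih]
    exact inter_biInter (s := Iio α) ⟨0, hα.bot_lt⟩ (cbIter A) U

theorem encard_cbIter_inter_add_sdiff (hU : IsClopen U) (A : Set X) (α : Ordinal) :
    (cbIter (A ∩ U) α).encard + (cbIter (A \ U) α).encard = (cbIter A α).encard := by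
  rw [inter_comm, sdiff_eq, inter_comm A, cbIter_inter_of_isOpen hU.isOpen,
    cbIter_inter_of_isOpen hU.compl.isOpen, inter_comm, inter_comm Uᶜ, ← sdiff_eq, add_comm]
  exact encard_sdiff_add_encard_inter (cbIter A α) U

theorem cbIter_infinite_of_lt (h : (cbIter A β).Nonempty) (hαβ : α < β) :
    (cbIter A α).Infinite := by
  obtain ⟨x, hx⟩ := h
  have hx' : x ∈ sderiv (cbIter A α) :=
    cbIter_add_one A α ▸ cbIter_antitone A (Order.add_one_le_of_lt hαβ) hx
  simpa only [univ_inter] using hx'.2 univ isOpen_univ (mem_univ x)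

theorem cbIter_eq_of_add_one_eq (h : cbIter A (α + 1) = cbIter A α) (hαβ : α ≤ β) :
    cbIter A β = cbIter A α := by
  refine (cbIter_antitone A hαβ).antisymm ?_
  induction β using Ordinal.limitRecOn with
  | zero => rw [nonpos_iff_eq_zero.1 hαβ]
  | add_one β ih =>
    obtain rfl | hlt := hαβ.eq_or_lt
    · rfl
    · rw [← h, cbIter_add_one, cbIter_add_one]
      exact sderiv_mono (ih (Order.lt_add_one_iff.1 hlt))
  | limit β hβ ih =>
    rw [cbIter_limit A hβ]
    refine subset_iInter₂ fun γ hγ => ?_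
    obtain hαγ | hγα := le_total α γ
    · exact ih γ hγ hαγ
    · exact cbIter_antitone A hγα

theorem exists_mem_cbIter_notMem_add_one (hρ : cbIter A ρ = ∅) (hα : (cbIter A α).Nonempty) :
    ∃ x ∈ cbIter A α, x ∉ cbIter A (α + 1) := by
  by_contra! h
  have hstable : cbIter A (α + 1) = cbIter A α :=
    (cbIter_antitone A le_self_add).antisymm h
  rw [← cbIter_eq_of_add_one_eq hstable (le_max_left α ρ)] at hα
  exact hα.ne_empty (subset_empty_iff.1 (hρ ▸ cbIter_antitone A (le_max_right α ρ)))

theorem exists_cbIter_finite_nonempty [CompactSpace X] (hA : IsClosed A) (hne : A.Nonempty)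
    (hρ : cbIter A ρ = ∅) : ∃ α : Ordinal.{v}, (cbIter A α).Finite ∧ (cbIter A α).Nonempty := by
  induction ρ using Ordinal.limitRecOn with
  | zero => exact (hne.ne_empty (cbIter_zero A ▸ hρ)).elim
  | add_one ρ ih =>
    obtain h | h := eq_empty_or_nonempty (cbIter A ρ)
    · exact ih h
    · rw [cbIter_add_one] at hρ
      exact ⟨ρ, finite_of_sderiv_eq_empty (isClosed_cbIter hA ρ).isCompact hρ, h⟩
  | limit ρ hlim ih =>
    have : Nonempty (Iio ρ) := ⟨⟨0, hlim.bot_lt⟩⟩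
    have hanti : Antitone fun β : Iio ρ => cbIter A β.1 := fun _ _ h => cbIter_antitone A h
    obtain ⟨⟨β, hβ⟩, hempty⟩ : ∃ β : Iio ρ, cbIter A β.1 = ∅ := by
      by_contra! hβ
      refine (IsCompact.nonempty_iInter_of_directed_nonempty_isCompact_isClosed _
        hanti.directed_ge hβ (fun β => (isClosed_cbIter hA β.1).isCompact)
        fun β => isClosed_cbIter hA β.1).ne_empty ?_
      rw [← hρ, cbIter_limit A hlim]
      exact (biInter_eq_iInter (Iio ρ) fun β _ => cbIter A β).symm
    exact ih β hβ hempty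

end IteratedDerivative

section Rank

variable {X : Type u} [TopologicalSpace X] {α : Ordinal.{u}} {ρ : Ordinal.{v}}

theorem cbIter_lift.{w} (A : Set X) (α : Ordinal.{v}) :
    cbIter A (Ordinal.lift.{w} α) = cbIter A α := by
  induction α using Ordinal.limitRecOn with
  | zero => rw [Ordinal.lift_zero, cbIter_zero, cbIter_zero]
  | add_one α ih => rw [Ordinal.lift_add, Ordinal.lift_one, cbIter_add_one, cbIter_add_one, ih]
  | limit α hα ih =>
    rw [cbIter_limit A hα, cbIter_limit A (Ordinal.isSuccLimit_lift.2 hα)]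
    refine Subset.antisymm (subset_iInter₂ fun β hβ => ?_) (subset_iInter₂ fun β hβ => ?_)
    · rw [← ih β hβ]
      exact biInter_subset_of_mem (s := Iio (Ordinal.lift.{w} α)) (Ordinal.lift_lt.2 hβ)
    · obtain ⟨γ, hγ, rfl⟩ := Ordinal.lt_lift_iff.1 hβ
      rw [ih γ hγ]
      exact iInter₂_subset γ hγ

theorem isCBRank_lift_iff.{w} : IsCBRank X (Ordinal.lift.{w} ρ) ↔ IsCBRank X ρ := by
  refine and_congr (by rw [cbIter_lift]) ⟨fun h β hβ => ?_, fun h β hβ => ?_⟩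
  · rw [← cbIter_lift.{u, v, w}]
    exact h _ (Ordinal.lift_lt.2 hβ)
  · obtain ⟨γ, hγ, rfl⟩ := Ordinal.lt_lift_iff.1 hβ
    rw [cbIter_lift]
    exact h γ hγ

theorem IsCBRank.lift_card_le (h : IsCBRank X ρ) :
    Cardinal.lift.{u} ρ.card ≤ Cardinal.lift.{v} (Cardinal.mk X) := by
  have hmem (β : Iio ρ) := exists_mem_cbIter_notMem_add_one h.1
    (nonempty_iff_ne_empty.2 (h.2 β.1 β.2))
  choose f hf hf' using hmem
  have hne {β γ : Iio ρ} (hβγ : β < γ) : f β ≠ f γ := fun heq =>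
    hf' β (cbIter_antitone univ (Order.add_one_le_of_lt hβγ) (heq ▸ hf γ))
  have hinj : Function.Injective f := Function.Injective.of_lt_imp_ne fun _ _ => hne
  rw [← Cardinal.mk_toType]
  exact Cardinal.lift_mk_le_lift_mk_of_injective
    (hinj.comp (Ordinal.ToType.mk (o := ρ)).symm.injective)

theorem IsCBRank.exists_lift_eq (h : IsCBRank X ρ) :
    ∃ ρ' : Ordinal.{u}, Ordinal.lift.{v} ρ' = Ordinal.lift.{u} ρ := by
  refine Ordinal.mem_range_lift_of_le (a := (Order.succ (Cardinal.mk X)).ord) (le_of_lt ?_)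
  rw [Cardinal.lift_ord, Cardinal.lt_ord, Cardinal.lift_succ, Order.lt_succ_iff,
    ← Ordinal.lift_card]
  exact h.lift_card_le

theorem IsCBRank.exists_eq_add_one [CompactSpace X] (h : IsCBRank X ρ) (hρ : ρ ≠ 0) :
    ∃ α, ρ = α + 1 ∧ (cbIter (univ : Set X) α).Finite ∧ (cbIter (univ : Set X) α).Nonempty := by
  have huniv : (univ : Set X).Nonempty := by
    rw [nonempty_iff_ne_empty, ← cbIter_zero univ]
    exact h.2 0 (pos_iff_ne_zero.2 hρ)
  obtain ⟨α, hfin, hne⟩ := exists_cbIter_finite_nonempty isClosed_univ huniv h.1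
  refine ⟨α, le_antisymm ?_ (Order.add_one_le_of_lt ?_), hfin, hne⟩
  · by_contra! hlt
    exact cbIter_infinite_of_lt (nonempty_iff_ne_empty.2 (h.2 _ hlt)) (lt_add_one α) hfin
  · by_contra! hle
    exact hne.ne_empty (subset_empty_iff.1 (h.1 ▸ cbIter_antitone univ hle))

theorem smallRank_iff_disjoint {O : Set X} (hO : IsOpen O)
    (hfin : (cbIter (univ : Set X) α).Finite) (hne : (cbIter (univ : Set X) α).Nonempty) :
    SmallRank O ↔ Disjoint O (cbIter univ α) := by
  have hO' (σ : Ordinal) : cbIter O σ = ∅ ↔ Disjoint O (cbIter univ σ) := by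
    rw [disjoint_iff_inter_eq_empty, ← cbIter_inter_of_isOpen hO, inter_univ]
  refine ⟨?_, fun h => ⟨α, (hO' α).2 h, hne.ne_empty⟩⟩
  rintro ⟨σ, hσ, hσne⟩
  have hσα : σ ≤ α := by
    by_contra! hlt
    exact cbIter_infinite_of_lt (nonempty_iff_ne_empty.2 hσne) hlt hfin
  exact ((hO' σ).1 hσ).mono_right (cbIter_antitone univ hσα)

theorem isRoughPartition_range_compl_sdiff_singleton [T1Space X]
    (hfin : (cbIter (univ : Set X) α).Finite) (hne : (cbIter (univ : Set X) α).Nonempty) :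
    IsRoughPartition (range fun p : cbIter (univ : Set X) α => (cbIter univ α \ {p.1})ᶜ) := by
  have hopen (p : X) : IsOpen (cbIter univ α \ {p})ᶜ :=
    (hfin.subset sdiff_subset).isClosed.isOpen_compl
  refine ⟨?_, ?_, ?_⟩
  · rw [sUnion_range, eq_univ_iff_forall]
    intro x
    rw [mem_iUnion]
    by_cases hx : x ∈ cbIter univ α
    · exact ⟨⟨x, hx⟩, fun h => h.2 rfl⟩
    · obtain ⟨p, hp⟩ := hne
      exact ⟨⟨p, hp⟩, fun h => hx h.1⟩
  · rintro _ ⟨⟨p, hp⟩, rfl⟩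
    refine ⟨hopen p, ?_⟩
    rw [smallRank_iff_disjoint (hopen p) hfin hne, not_disjoint_iff]
    exact ⟨p, fun h => h.2 rfl, hp⟩
  · rintro _ ⟨⟨p, hp⟩, rfl⟩ _ ⟨⟨q, hq⟩, rfl⟩ hpq
    rw [smallRank_iff_disjoint ((hopen p).inter (hopen q)) hfin hne, disjoint_left]
    rintro x ⟨hxp, hxq⟩ hx
    have hxp' : x = p := not_not.1 fun h => hxp ⟨hx, h⟩
    have hxq' : x = q := not_not.1 fun h => hxq ⟨hx, h⟩
    subst hxp' hxq'
    exact hpq rfl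

theorem IsRoughPartition.mk_le {P : Set (Set X)} (hP : IsRoughPartition P)
    (hfin : (cbIter (univ : Set X) α).Finite) (hne : (cbIter (univ : Set X) α).Nonempty) :
    Cardinal.mk P ≤ Cardinal.mk (cbIter (univ : Set X) α) := by
  obtain ⟨-, hlarge, hsmall⟩ := hP
  have hmeet (O : P) : ∃ p ∈ O.1, p ∈ cbIter univ α := by
    rw [← not_disjoint_iff, ← smallRank_iff_disjoint (hlarge O O.2).1 hfin hne]
    exact (hlarge O O.2).2
  choose f hfO hf using hmeet
  refine Cardinal.mk_le_of_injective (f := fun O => (⟨f O, hf O⟩ : cbIter univ α)) fun O O' h => ?_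
  have hff' : f O = f O' := congrArg Subtype.val h
  by_contra hOO'
  have hinter := hsmall O O.2 O' O'.2 (Subtype.coe_ne_coe.2 hOO')
  rw [smallRank_iff_disjoint ((hlarge O O.2).1.inter (hlarge O' O'.2).1) hfin hne] at hinter
  exact disjoint_left.1 hinter ⟨hfO O, hff' ▸ hfO O'⟩ (hf O)

theorem cbDegree_eq_mk [T1Space X]
    (hfin : (cbIter (univ : Set X) α).Finite) (hne : (cbIter (univ : Set X) α).Nonempty) :
    cbDegree X = Cardinal.mk (cbIter (univ : Set X) α) := by
  refine IsGreatest.csSup_eq ⟨⟨_, isRoughPartition_range_compl_sdiff_singleton hfin hne, ?_⟩, ?_⟩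
  · refine (Cardinal.mk_range_eq _ fun p q hpq => ?_).symm
    have hp : p.1 ∉ cbIter univ α \ {q.1} := compl_injective hpq ▸ fun h => h.2 rfl
    exact Subtype.ext (not_not.1 fun h => hp ⟨p.2, h⟩)
  · rintro _ ⟨P, hP, rfl⟩
    exact hP.mk_le hfin hne

end Rank

section CBEquiv

variable {X Y : Type u} [TopologicalSpace X] [TopologicalSpace Y] {A A' U : Set X} {B : Set Y}
  {α ρ : Ordinal.{u}}

/-- Two sets have the same Cantor-Bendixson rank and degree. For a nonempty closed subset of a
compact scattered space the cardinality of the iterated derivative is `⊤` below the top level, is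
the degree at the top level, and is `0` above it; comparing cardinalities at every level encodes
both invariants and needs no convention for the empty set. -/
def CBEquiv (A : Set X) (B : Set Y) : Prop :=
  ∀ α : Ordinal.{u}, (cbIter A α).encard = (cbIter B α).encard

theorem CBEquiv.symm (h : CBEquiv A B) : CBEquiv B A := fun α => (h α).symm

theorem CBEquiv.cbIter_eq_empty_iff (h : CBEquiv A B) : cbIter A α = ∅ ↔ cbIter B α = ∅ := by
  rw [← encard_eq_zero, h α, encard_eq_zero]

theorem cbEquiv_empty_left_iff : CBEquiv (∅ : Set X) B ↔ B = ∅ := by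
  refine ⟨fun h => ?_, ?_⟩
  · rw [← cbIter_zero B, ← h.cbIter_eq_empty_iff, cbIter_zero]
  · rintro rfl α
    rw [subset_empty_iff.1 (cbIter_subset (∅ : Set X) α),
      subset_empty_iff.1 (cbIter_subset (∅ : Set Y) α), encard_empty, encard_empty]

theorem cbEquiv_empty_right_iff : CBEquiv A (∅ : Set Y) ↔ A = ∅ :=
  ⟨fun h => cbEquiv_empty_left_iff.1 h.symm, fun h => (cbEquiv_empty_left_iff.2 h).symm⟩

theorem CBEquiv.of_encard_eq (hfin : (cbIter A α).Finite) (hne : (cbIter A α).Nonempty)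
    (h : (cbIter A α).encard = (cbIter B α).encard) : CBEquiv A B := by
  have hne' : (cbIter B α).Nonempty := by rwa [← encard_pos, ← h, encard_pos]
  have hfin' : (cbIter B α).Finite := by rwa [← encard_lt_top_iff, ← h, encard_lt_top_iff]
  intro β
  obtain hβ | rfl | hβ := lt_trichotomy β α
  · rw [(cbIter_infinite_of_lt hne hβ).encard_eq, (cbIter_infinite_of_lt hne' hβ).encard_eq]
  · exact h
  · rw [not_nonempty_iff_eq_empty.1 fun hA => cbIter_infinite_of_lt hA hβ hfin,
      not_nonempty_iff_eq_empty.1 fun hB => cbIter_infinite_of_lt hB hβ hfin',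
      encard_empty, encard_empty]

theorem cbEquiv_univ [CompactSpace X] [CompactSpace Y] [T1Space X] [T1Space Y]
    (hX : IsCBRank X ρ) (hY : IsCBRank Y ρ) (hdeg : cbDegree X = cbDegree Y) :
    CBEquiv (univ : Set X) (univ : Set Y) := by
  obtain rfl | hρ := eq_or_ne ρ 0
  · have hX' := hX.1
    have hY' := hY.1
    rw [cbIter_zero] at hX' hY'
    rw [hX', hY', cbEquiv_empty_left_iff]
  · obtain ⟨α, rfl, hfinX, hneX⟩ := hX.exists_eq_add_one hρ
    obtain ⟨β, hβ, hfinY, hneY⟩ := hY.exists_eq_add_one hρ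
    obtain rfl := Order.add_one_inj.1 hβ
    rw [cbDegree_eq_mk hfinX hneX, cbDegree_eq_mk hfinY hneY] at hdeg
    exact CBEquiv.of_encard_eq hfinX hneX (encard_congr (Cardinal.eq.1 hdeg).some)

section Splitting

theorem exists_isClopen_cbIter_eq_singleton [CompactSpace X] [T2Space X]
    [TotallyDisconnectedSpace X] (hA : IsClopen A) {x : X}
    (hx : x ∈ cbIter A α) (hx' : x ∉ cbIter A (α + 1)) :
    ∃ U ⊆ A, IsClopen U ∧ cbIter U α = {x} := by
  rw [cbIter_add_one] at hx'
  obtain ⟨W, hW, hxW, hfin⟩ := exists_isOpen_inter_finite hx hx'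
  have hclosed : IsClosed ((W ∩ cbIter A α) \ {x}) := (hfin.subset sdiff_subset).isClosed
  obtain ⟨U, hU, hxU, hUW⟩ := compact_exists_isClopen_in_isOpen
    ((hW.inter hA.isOpen).inter hclosed.isOpen_compl)
    ⟨⟨hxW, cbIter_subset A α hx⟩, fun h => h.2 rfl⟩
  have hUA : U ⊆ A := fun y hy => (hUW hy).1.2
  refine ⟨U, hUA, hU, ?_⟩
  rw [← inter_eq_left.2 hUA, cbIter_inter_of_isOpen hU.isOpen, eq_singleton_iff_unique_mem]
  refine ⟨⟨hxU, hx⟩, fun y hy => ?_⟩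
  by_contra hyx
  exact (hUW hy.1).2 ⟨⟨(hUW hy.1).1.1, hy.2⟩, hyx⟩

theorem exists_isClopen_subset_encard_cbIter_eq [CompactSpace X] [T2Space X]
    [TotallyDisconnectedSpace X] (hA : IsClopen A) (hρ : cbIter A ρ = ∅) {n : ℕ}
    (hn : n ≤ (cbIter A α).encard) :
    ∃ U ⊆ A, IsClopen U ∧ (cbIter U α).encard = n := by
  induction n generalizing A with
  | zero =>
    refine ⟨∅, empty_subset A, isClopen_empty, ?_⟩
    rw [subset_empty_iff.1 (cbIter_subset ∅ α), encard_empty, Nat.cast_zero]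
  | succ n ih =>
    rw [Nat.cast_add, Nat.cast_one] at hn ⊢
    obtain ⟨x, hx, hx'⟩ := exists_mem_cbIter_notMem_add_one hρ
      (encard_pos.1 ((zero_lt_one.trans_le le_add_self).trans_le hn))
    obtain ⟨W, hWA, hW, hWx⟩ := exists_isClopen_cbIter_eq_singleton hA hx hx'
    have hAW := encard_cbIter_inter_add_sdiff hW A α
    rw [inter_eq_right.2 hWA, hWx, encard_singleton, add_comm] at hAW
    rw [← hAW, ENat.add_le_add_iff_right ENat.one_ne_top] at hn
    obtain ⟨V, hVA, hV, hVn⟩ := ih (hA.diff hW)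
      (cbIter_eq_empty_mono sdiff_subset hρ) hn
    refine ⟨V ∪ W, union_subset (hVA.trans sdiff_subset) hWA, hV.union hW, ?_⟩
    have hVW : Disjoint V W := disjoint_sdiff_left.mono_left hVA
    rw [← encard_cbIter_inter_add_sdiff hV, union_inter_cancel_left, union_sdiff_left,
      hVW.symm.sdiff_eq_left, hVn, hWx, encard_singleton]

variable [CompactSpace X] [CompactSpace Y] [T2Space Y] [TotallyDisconnectedSpace Y]

theorem CBEquiv.exists_isClopen_subset (h : CBEquiv A B) (hB : IsClopen B)
    (hρ : cbIter A ρ = ∅) (hA' : IsClosed A') (hA'A : A' ⊆ A) :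
    ∃ V ⊆ B, IsClopen V ∧ CBEquiv A' V := by
  obtain rfl | hne := A'.eq_empty_or_nonempty
  · exact ⟨∅, empty_subset B, isClopen_empty, cbEquiv_empty_left_iff.2 rfl⟩
  obtain ⟨α, hfin, hne⟩ := exists_cbIter_finite_nonempty hA' hne
    (cbIter_eq_empty_mono hA'A hρ)
  obtain ⟨n, hn⟩ := ENat.ne_top_iff_exists.1 (encard_ne_top_iff.2 hfin)
  have hnB : n ≤ (cbIter B α).encard := by
    rw [hn, ← h α]
    exact encard_le_encard (cbIter_mono hA'A α)
  obtain ⟨V, hVB, hV, hVn⟩ :=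
    exists_isClopen_subset_encard_cbIter_eq hB (h.cbIter_eq_empty_iff.1 hρ) hnB
  exact ⟨V, hVB, hV, .of_encard_eq hfin hne (hn.symm.trans hVn.symm)⟩

theorem CBEquiv.exists_split_of_nonempty (h : CBEquiv A B) (hA : IsClosed A) (hB : IsClopen B)
    (hρ : cbIter A ρ = ∅) (hU : IsClopen U) (hfin : (cbIter A α).Finite)
    (hne : (cbIter (A \ U) α).Nonempty) :
    ∃ V ⊆ B, IsClopen V ∧ CBEquiv (A ∩ U) V ∧ CBEquiv (A \ U) (B \ V) := by
  obtain ⟨V, hVB, hV, hUV⟩ :=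
    h.exists_isClopen_subset hB hρ (hA.inter hU.isClosed) inter_subset_left
  refine ⟨V, hVB, hV, hUV,
    .of_encard_eq (hfin.subset (cbIter_mono sdiff_subset α)) hne ?_⟩
  have htop : (cbIter V α).encard ≠ ⊤ := by
    rw [← hUV α, encard_ne_top_iff]
    exact hfin.subset (cbIter_mono inter_subset_left α)
  refine ENat.add_right_injective_of_ne_top htop ?_
  calc (cbIter V α).encard + (cbIter (A \ U) α).encard
      = (cbIter (A ∩ U) α).encard + (cbIter (A \ U) α).encard := by rw [hUV α]
    _ = (cbIter A α).encard := encard_cbIter_inter_add_sdiff hU A α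
    _ = (cbIter B α).encard := h α
    _ = (cbIter (B ∩ V) α).encard + (cbIter (B \ V) α).encard :=
      (encard_cbIter_inter_add_sdiff hV B α).symm
    _ = (cbIter V α).encard + (cbIter (B \ V) α).encard := by rw [inter_eq_right.2 hVB]

theorem CBEquiv.exists_split (h : CBEquiv A B) (hA : IsClosed A) (hB : IsClopen B)
    (hρ : cbIter A ρ = ∅) (hU : IsClopen U) :
    ∃ V ⊆ B, IsClopen V ∧ CBEquiv (A ∩ U) V ∧ CBEquiv (A \ U) (B \ V) := by
  obtain rfl | hne := A.eq_empty_or_nonempty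
  · rw [cbEquiv_empty_left_iff] at h
    refine ⟨∅, empty_subset B, isClopen_empty, ?_⟩
    simp only [h, empty_inter, empty_sdiff, cbEquiv_empty_left_iff, and_self]
  obtain ⟨α, hfin, hne⟩ := exists_cbIter_finite_nonempty hA hne hρ
  by_cases hU' : (cbIter (A \ U) α).Nonempty
  · exact h.exists_split_of_nonempty hA hB hρ hU hfin hU'
  · have hU'' : (cbIter (A \ Uᶜ) α).Nonempty := by
      have hsum := encard_cbIter_inter_add_sdiff hU A α
      rw [not_nonempty_iff_eq_empty.1 hU', encard_empty, add_zero] at hsum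
      rwa [sdiff_compl, ← encard_pos, hsum, encard_pos]
    obtain ⟨V, hVB, hV, hV₁, hV₂⟩ := h.exists_split_of_nonempty hA hB hρ hU.compl hfin hU''
    rw [← sdiff_eq] at hV₁
    rw [sdiff_compl] at hV₂
    refine ⟨B \ V, sdiff_subset, hB.diff hV, hV₂, ?_⟩
    rwa [sdiff_sdiff_cancel_left hVB]

end Splitting

end CBEquiv

section BackAndForth

variable {X : Type u} {Y : Type v} [TopologicalSpace X] [TopologicalSpace Y]
  {R : Clopens X → Clopens Y → Prop} {A : Clopens X} {B : Clopens Y}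

/-- A back-and-forth relation between two Boolean algebras of clopen sets, in the sense of
Vaught: related sets vanish together, and every splitting of one of two related sets is matched by
a splitting of the other. -/
structure IsBackAndForth (R : Clopens X → Clopens Y → Prop) : Prop where
  left_bot_iff (B : Clopens Y) : R ⊥ B ↔ B = ⊥
  right_bot_iff (A : Clopens X) : R A ⊥ ↔ A = ⊥
  forth {A : Clopens X} {B : Clopens Y} (h : R A B) (U : Clopens X) :
    ∃ V, R (A ⊓ U) (B ⊓ V) ∧ R (A \ U) (B \ V)
  back {A : Clopens X} {B : Clopens Y} (h : R A B) (V : Clopens Y) :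
    ∃ U, R (A ⊓ U) (B ⊓ V) ∧ R (A \ U) (B \ V)

theorem IsBackAndForth.eq_bot_iff (hR : IsBackAndForth R) (h : R A B) : A = ⊥ ↔ B = ⊥ := by
  constructor
  · rintro rfl
    exact (hR.left_bot_iff B).1 h
  · rintro rfl
    exact (hR.right_bot_iff A).1 h

/-- The fibre of a locally constant labelling over `n`, as a clopen set. A labelling by natural
numbers serves as an indexed clopen partition, some of whose pieces may be empty. -/
def fiber (f : LocallyConstant X ℕ) (n : ℕ) : Clopens X :=
  ⟨{x | f x = n}, f.isLocallyConstant.isClopen_fiber n⟩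

theorem fiber_eq_bot_iff {f : LocallyConstant X ℕ} {n : ℕ} : fiber f n = ⊥ ↔ ∀ x, f x ≠ n := by
  rw [← SetLike.coe_set_eq, Clopens.coe_bot, eq_empty_iff_forall_notMem]
  rfl

open Classical in
/-- The refinement of a labelling that cuts the piece over `n` along the clopen set `U n`. The new
label appends to the old one a binary digit, which is `true` inside the cutting set. -/
noncomputable def splitLabel (f : LocallyConstant X ℕ) (U : ℕ → Clopens X) :
    LocallyConstant X ℕ where
  toFun x := Nat.bit (decide (x ∈ U (f x))) (f x)
  isLocallyConstant := by
    rw [IsLocallyConstant.iff_eventually_eq]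
    intro x
    have hf : ∀ᶠ y in 𝓝 x, f y = f x := f.isLocallyConstant.eventually_eq x
    have hU : ∀ᶠ y in 𝓝 x, (y ∈ U (f x) ↔ x ∈ U (f x)) := by
      by_cases hx : x ∈ U (f x)
      · filter_upwards [(U (f x)).isClopen.isOpen.mem_nhds hx] with y hy using iff_of_true hy hx
      · filter_upwards [(U (f x)).isClopen.compl.isOpen.mem_nhds hx] with y hy
          using iff_of_false hy hx
    filter_upwards [hf, hU] with y hy hyU
    rw [hy, decide_eq_decide.2 hyU]

open Classical in
theorem splitLabel_apply (f : LocallyConstant X ℕ) (U : ℕ → Clopens X) (x : X) :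
    splitLabel f U x = Nat.bit (decide (x ∈ U (f x))) (f x) := rfl

theorem div2_splitLabel (f : LocallyConstant X ℕ) (U : ℕ → Clopens X) (x : X) :
    (splitLabel f U x).div2 = f x :=
  Nat.div2_bit _ _

open Classical in
theorem splitLabel_eq_bit_iff {f : LocallyConstant X ℕ} {U : ℕ → Clopens X} {b : Bool} {n : ℕ}
    {x : X} : splitLabel f U x = Nat.bit b n ↔ f x = n ∧ (x ∈ U n ↔ b = true) := by
  constructor
  · intro h
    have hn : f x = n := by rw [← div2_splitLabel f U, h, Nat.div2_bit]
    have hb := congrArg Nat.bodd h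
    rw [splitLabel_apply, Nat.bodd_bit, Nat.bodd_bit, hn] at hb
    exact ⟨hn, by rw [← hb, decide_eq_true_eq]⟩
  · rintro ⟨rfl, hb⟩
    rw [splitLabel_apply, Bool.decide_congr hb, Bool.decide_eq_true]

theorem fiber_splitLabel_bit_true (f : LocallyConstant X ℕ) (U : ℕ → Clopens X) (n : ℕ) :
    fiber (splitLabel f U) (Nat.bit true n) = fiber f n ⊓ U n := by
  ext x
  exact splitLabel_eq_bit_iff.trans (and_congr_right fun _ => iff_true_right rfl)

theorem fiber_splitLabel_bit_false (f : LocallyConstant X ℕ) (U : ℕ → Clopens X) (n : ℕ) :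
    fiber (splitLabel f U) (Nat.bit false n) = fiber f n \ U n := by
  ext x
  exact splitLabel_eq_bit_iff.trans (and_congr_right fun _ => iff_false_right Bool.false_ne_true)

theorem mem_iff_of_splitLabel_eq {f : LocallyConstant X ℕ} {U : Clopens X} {x x' : X}
    (h : splitLabel f (fun _ => U) x = splitLabel f (fun _ => U) x') : x ∈ U ↔ x' ∈ U := by
  have hb := congrArg Nat.bodd h
  rwa [splitLabel_apply, splitLabel_apply, Nat.bodd_bit, Nat.bodd_bit, decide_eq_decide] at hb

/-- A finite stage of the back-and-forth construction: labellings of the two spaces whose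
corresponding pieces are related. -/
structure Labelling (R : Clopens X → Clopens Y → Prop) where
  left : LocallyConstant X ℕ
  right : LocallyConstant Y ℕ
  rel (n : ℕ) : R (fiber left n) (fiber right n)

namespace Labelling

instance : Preorder (Labelling R) where
  le p q := ∃ t : ℕ → ℕ, (∀ x, p.left x = t (q.left x)) ∧ ∀ y, p.right y = t (q.right y)
  le_refl _ := ⟨id, fun _ => rfl, fun _ => rfl⟩
  le_trans := by
    rintro p q r ⟨t, htl, htr⟩ ⟨s, hsl, hsr⟩
    exact ⟨t ∘ s, fun x => by rw [htl, hsl, Function.comp_apply],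
      fun y => by rw [htr, hsr, Function.comp_apply]⟩

/-- The labelling with a single piece on either side. -/
noncomputable def single (hR : IsBackAndForth R) (h : R ⊤ ⊤) : Labelling R where
  left := .const X 0
  right := .const Y 0
  rel n := by
    obtain rfl | hn := eq_or_ne n 0
    · convert h using 1 <;> ext <;> exact iff_true_intro rfl
    · rw [fiber_eq_bot_iff.2 fun _ => hn.symm, fiber_eq_bot_iff.2 fun _ => hn.symm]
      exact (hR.left_bot_iff ⊥).2 rfl

/-- The refinement of a labelling obtained by matched cuts of corresponding pieces. -/
noncomputable def refine (p : Labelling R) (U : ℕ → Clopens X) (V : ℕ → Clopens Y)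
    (h : ∀ n, R (fiber p.left n ⊓ U n) (fiber p.right n ⊓ V n) ∧
      R (fiber p.left n \ U n) (fiber p.right n \ V n)) : Labelling R where
  left := splitLabel p.left U
  right := splitLabel p.right V
  rel m := by
    obtain ⟨b, n, rfl⟩ : ∃ b n, m = Nat.bit b n := ⟨m.bodd, m.div2, m.bit_bodd_div2.symm⟩
    cases b
    · rw [fiber_splitLabel_bit_false, fiber_splitLabel_bit_false]
      exact (h n).2
    · rw [fiber_splitLabel_bit_true, fiber_splitLabel_bit_true]
      exact (h n).1

theorem le_refine (p : Labelling R) (U : ℕ → Clopens X) (V : ℕ → Clopens Y)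
    (h : ∀ n, R (fiber p.left n ⊓ U n) (fiber p.right n ⊓ V n) ∧
      R (fiber p.left n \ U n) (fiber p.right n \ V n)) : p ≤ p.refine U V h :=
  ⟨Nat.div2, fun x => (div2_splitLabel p.left U x).symm,
    fun y => (div2_splitLabel p.right V y).symm⟩

end Labelling

namespace IsBackAndForth

/-- The labellings whose pieces in the left space are not cut by `U`. -/
def decidingLeft (hR : IsBackAndForth R) (U : Clopens X) : Order.Cofinal (Labelling R) where
  carrier := {q | ∀ x x', q.left x = q.left x' → (x ∈ U ↔ x' ∈ U)}
  isCofinal p := by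
    choose V hV using fun n => hR.forth (p.rel n) U
    exact ⟨p.refine (fun _ => U) V hV, fun _ _ => mem_iff_of_splitLabel_eq, p.le_refine _ V hV⟩

/-- The labellings whose pieces in the right space are not cut by `V`. -/
def decidingRight (hR : IsBackAndForth R) (V : Clopens Y) : Order.Cofinal (Labelling R) where
  carrier := {q | ∀ y y', q.right y = q.right y' → (y ∈ V ↔ y' ∈ V)}
  isCofinal p := by
    choose U hU using fun n => hR.back (p.rel n) V
    exact ⟨p.refine U (fun _ => V) hU, fun _ _ => mem_iff_of_splitLabel_eq, p.le_refine U _ hU⟩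

theorem exists_monotone_separating [HasCountableSeparatingOn X IsClopen univ]
    [HasCountableSeparatingOn Y IsClopen univ] (hR : IsBackAndForth R) (h : R ⊤ ⊤) :
    ∃ p : ℕ → Labelling R, Monotone p ∧ (Function.Injective fun x n => (p n).left x) ∧
      Function.Injective fun y n => (p n).right y := by
  obtain ⟨U, hU, hUsep⟩ := exists_seq_separating X isClopen_univ univ
  obtain ⟨V, hV, hVsep⟩ := exists_seq_separating Y isClopen_univ univ
  let 𝒟 : ℕ ⊕ ℕ → Order.Cofinal (Labelling R) :=
    Sum.elim (fun i => hR.decidingLeft ⟨U i, hU i⟩) (fun i => hR.decidingRight ⟨V i, hV i⟩)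
  have hmem := Order.sequenceOfCofinals.encode_mem (Labelling.single hR h) 𝒟
  exact ⟨_, Order.sequenceOfCofinals.monotone _ 𝒟,
    fun x x' hxx' => hUsep x trivial x' trivial fun i => hmem (.inl i) x x' (congrFun hxx' _),
    fun y y' hyy' => hVsep y trivial y' trivial fun i => hmem (.inr i) y y' (congrFun hyy' _)⟩

theorem exists_left_eq_iff (hR : IsBackAndForth R) (p : Labelling R) (n : ℕ) :
    (∃ x, p.left x = n) ↔ ∃ y, p.right y = n := by
  rw [← not_iff_not, not_exists, not_exists]
  exact fiber_eq_bot_iff.symm.trans ((hR.eq_bot_iff (p.rel n)).trans fiber_eq_bot_iff)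

end IsBackAndForth

theorem exists_forall_eq_of_refining [CompactSpace X] {f : ℕ → LocallyConstant X ℕ} {a : ℕ → ℕ}
    (hne : ∀ n, ∃ x, f n x = a n)
    (href : ∀ n, ∃ t : ℕ → ℕ, (∀ x, f n x = t (f (n + 1) x)) ∧ a n = t (a (n + 1))) :
    ∃ x, ∀ n, f n x = a n := by
  have hclosed (n : ℕ) : IsClosed {x | f n x = a n} := (fiber (f n) (a n)).isClopen.isClosed
  have hanti (n : ℕ) : {x | f (n + 1) x = a (n + 1)} ⊆ {x | f n x = a n} := by
    obtain ⟨t, htf, hta⟩ := href n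
    exact fun x hx => (htf x).trans ((congrArg t hx).trans hta.symm)
  obtain ⟨x, hx⟩ := IsCompact.nonempty_iInter_of_sequence_nonempty_isCompact_isClosed
    (fun n => {x | f n x = a n}) hanti hne (hclosed 0).isCompact hclosed
  exact ⟨x, mem_iInter.1 hx⟩

theorem nonempty_homeomorph_of_range_eq {Z : Type*} [TopologicalSpace Z] [T2Space Z]
    [CompactSpace X] [CompactSpace Y] {f : X → Z} {g : Y → Z} (hf : Continuous f)
    (hf' : Function.Injective f) (hg : Continuous g) (hg' : Function.Injective g)
    (h : range f = range g) : Nonempty (X ≃ₜ Y) :=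
  ⟨(hf.isClosedEmbedding hf').isEmbedding.toHomeomorph.trans <| (Homeomorph.setCongr h).trans
    (hg.isClosedEmbedding hg').isEmbedding.toHomeomorph.symm⟩

theorem IsBackAndForth.nonempty_homeomorph [CompactSpace X] [CompactSpace Y]
    [HasCountableSeparatingOn X IsClopen univ] [HasCountableSeparatingOn Y IsClopen univ]
    (hR : IsBackAndForth R) (h : R ⊤ ⊤) : Nonempty (X ≃ₜ Y) := by
  obtain ⟨p, hp, hleft, hright⟩ := hR.exists_monotone_separating h
  have href (n : ℕ) := hp n.le_succ
  refine nonempty_homeomorph_of_range_eq (continuous_pi fun n => (p n).left.continuous) hleft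
    (continuous_pi fun n => (p n).right.continuous) hright (Subset.antisymm ?_ ?_)
  · rintro _ ⟨x, rfl⟩
    obtain ⟨y, hy⟩ := exists_forall_eq_of_refining (f := fun n => (p n).right)
      (fun n => (hR.exists_left_eq_iff (p n) _).1 ⟨x, rfl⟩)
      fun n => (href n).imp fun _ ht => ⟨ht.2, ht.1 x⟩
    exact ⟨y, funext hy⟩
  · rintro _ ⟨y, rfl⟩
    obtain ⟨x, hx⟩ := exists_forall_eq_of_refining (f := fun n => (p n).left)
      (fun n => (hR.exists_left_eq_iff (p n) _).2 ⟨y, rfl⟩)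
      fun n => (href n).imp fun _ ht => ⟨ht.1, ht.2 y⟩
    exact ⟨x, funext hx⟩

end BackAndForth

instance hasCountableSeparatingOn_isClopen {X : Type*} [TopologicalSpace X] [Countable X]
    [TotallySeparatedSpace X] : HasCountableSeparatingOn X IsClopen univ := by
  choose! U hU hxU hyU using fun (x y : X) (h : x ≠ y) => exists_isClopen_of_totally_separated h
  refine ⟨(fun q : X × X => U q.1 q.2) '' {q | q.1 ≠ q.2}, (to_countable _).image _, ?_,
    fun x _ y _ h => ?_⟩
  · rintro _ ⟨q, hq, rfl⟩
    exact hU q.1 q.2 hq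
  · by_contra hxy
    exact hyU x y hxy ((h _ ⟨(x, y), hxy, rfl⟩).1 (hxU x y hxy))

theorem isBackAndForth_cbEquiv {X Y : Type u} [TopologicalSpace X] [TopologicalSpace Y]
    [CompactSpace X] [CompactSpace Y] [T2Space X] [T2Space Y] [TotallyDisconnectedSpace X]
    [TotallyDisconnectedSpace Y] {ρ : Ordinal.{u}} (hX : cbIter (univ : Set X) ρ = ∅) :
    IsBackAndForth fun (A : Clopens X) (B : Clopens Y) => CBEquiv (A : Set X) (B : Set Y) where
  left_bot_iff B := by
    exact cbEquiv_empty_left_iff.trans (SetLike.coe_set_eq (p := B) (q := ⊥))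
  right_bot_iff A := by
    exact cbEquiv_empty_right_iff.trans (SetLike.coe_set_eq (p := A) (q := ⊥))
  forth {A B} h U := by
    have hA := cbIter_eq_empty_mono (subset_univ (A : Set X)) hX
    obtain ⟨V, hVB, hV, h₁, h₂⟩ := h.exists_split A.isClopen.isClosed B.isClopen hA U.isClopen
    refine ⟨⟨V, hV⟩, ?_, h₂⟩
    rwa [inf_eq_right.2 (show (⟨V, hV⟩ : Clopens Y) ≤ B from hVB)]
  back {A B} h V := by
    have hA := cbIter_eq_empty_mono (subset_univ (A : Set X)) hX
    obtain ⟨U, hUA, hU, h₁, h₂⟩ := h.symm.exists_split B.isClopen.isClosed A.isClopen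
      (h.cbIter_eq_empty_iff.1 hA) V.isClopen
    refine ⟨⟨U, hU⟩, ?_, h₂.symm⟩
    rw [inf_eq_right.2 (show (⟨U, hU⟩ : Clopens X) ≤ A from hUA)]
    exact h₁.symm

/-- Two countable compact Hausdorff spaces with the same Cantor-Bendixson rank and the
same Cantor-Bendixson degree are homeomorphic. -/
theorem countable_compact_T2_homeomorph_of_rank_degree (X Y : Type u) [TopologicalSpace X]
    [TopologicalSpace Y] [CompactSpace X] [CompactSpace Y] [T2Space X] [T2Space Y]
    [Countable X] [Countable Y] {ρ : Ordinal}
    (hX : IsCBRank X ρ) (hY : IsCBRank Y ρ) (hdeg : cbDegree X = cbDegree Y) :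
    Nonempty (X ≃ₜ Y) := by
  obtain ⟨ρ', hρ'⟩ := hX.exists_lift_eq
  rw [← isCBRank_lift_iff, ← hρ', isCBRank_lift_iff] at hX hY
  exact (isBackAndForth_cbEquiv hX.1).nonempty_homeomorph (cbEquiv_univ hX hY hdeg)
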